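/- Let 𝕊 be a superreflexive subsymmetric sequence space. Then the fundamental function Λ[𝕊]=(Λ_m[𝕊]) has both the upper regularity property and the lower regularity property. -/

import Mathlib

noncomputable section

open Classical
open scoped ENNReal NNReal

namespace AGpaper

/-! ### Convergence and completeness with respect to a gauge -/

/-- Convergence of a sequence with respect to a gauge (quasi-norm) `q`. -/
def QTendsto {X : Type*} [AddCommGroup X] (q : X → ℝ) (u : ℕ → X) (x : X) : Prop :=
  ∀ ε : ℝ, 0 < ε → ∃ n₀ : ℕ, ∀ n, n₀ ≤ n → q (u n - x) < ε

/-- Cauchy condition with respect to a gauge `q`. -/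
def QCauchy {X : Type*} [AddCommGroup X] (q : X → ℝ) (u : ℕ → X) : Prop :=
  ∀ ε : ℝ, 0 < ε → ∃ n₀ : ℕ, ∀ m, n₀ ≤ m → ∀ n, n₀ ≤ n → q (u m - u n) < ε

/-- A quasi-Banach space structure on a real vector space `X`. -/
structure QuasiBanach (X : Type*) [AddCommGroup X] [Module ℝ X] where
  q : X → ℝ
  kappa : ℝ
  one_le_kappa : 1 ≤ kappa
  q_nonneg : ∀ x, 0 ≤ q x
  q_eq_zero_iff : ∀ x, q x = 0 ↔ x = 0
  q_smul : ∀ (a : ℝ) (x : X), q (a • x) = |a| * q x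
  q_triangle : ∀ x y, q (x + y) ≤ kappa * (q x + q y)
  complete : ∀ u : ℕ → X, QCauchy q u → ∃ x, QTendsto q u x

/-- `X` is `p`-convex (0<p≤1): after renorming the quasi-norm is a `p`-norm. -/
def QuasiBanach.PConvex {X : Type*} [AddCommGroup X] [Module ℝ X]
    (B : QuasiBanach X) (p : ℝ) : Prop :=
  ∃ q' : X → ℝ, (∀ x, 0 ≤ q' x) ∧ (∀ (a : ℝ) (x : X), q' (a • x) = |a| * q' x) ∧
    (∀ x y, q' (x + y) ^ p ≤ q' x ^ p + q' y ^ p) ∧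
    ∃ c C : ℝ, 0 < c ∧ ∀ x, c * B.q x ≤ q' x ∧ q' x ≤ C * B.q x

/-! ### Biorthogonal systems and Schauder bases -/

variable {X : Type*} [AddCommGroup X] [Module ℝ X]

/-- A biorthogonal system in a space of vectors `X` which is equipped with a
membership predicate `mem` (the carrier of the space) and a gauge `nrm`:
the coordinate functionals are linear and bounded on the carrier. -/
structure BioSystem (mem : X → Prop) (nrm : X → ℝ) where
  vec : ℕ → X
  vec_mem : ∀ n, mem (vec n)
  coord : ℕ → X → ℝ
  coord_add : ∀ (n : ℕ) (f g : X), mem f → mem g → coord n (f + g) = coord n f + coord n g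
  coord_smul : ∀ (n : ℕ) (a : ℝ) (f : X), mem f → coord n (a • f) = a * coord n f
  coord_bdd : ∀ n : ℕ, ∃ C : ℝ, ∀ f, mem f → |coord n f| ≤ C * nrm f
  biorth : ∀ m n, coord m (vec n) = if m = n then (1 : ℝ) else 0

/-- A Schauder basis: a biorthogonal system whose expansions converge. -/
structure SchauderB (mem : X → Prop) (nrm : X → ℝ) extends BioSystem mem nrm where
  expansion : ∀ f, mem f →
    QTendsto nrm (fun m => ∑ n ∈ Finset.range m, coord n f • vec n) f

/-- A Schauder basis of a quasi-Banach space. -/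
abbrev QBasis {X : Type*} [AddCommGroup X] [Module ℝ X] (B : QuasiBanach X) :=
  SchauderB (fun _ : X => True) B.q

variable {mem : X → Prop} {nrm : X → ℝ}

/-- Coordinate projection on a finite set `A`. -/
def BioSystem.proj (b : BioSystem mem nrm) (A : Finset ℕ) (f : X) : X :=
  ∑ n ∈ A, b.coord n f • b.vec n

def BioSystem.SemiNormalized (b : BioSystem mem nrm) : Prop :=
  ∃ c C : ℝ, 0 < c ∧ ∀ n, c ≤ nrm (b.vec n) ∧ nrm (b.vec n) ≤ C

/-- `A` is a greedy set of `f`. -/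
def BioSystem.GreedySet (b : BioSystem mem nrm) (f : X) (A : Finset ℕ) : Prop :=
  ∀ j ∈ A, ∀ k, k ∉ A → |b.coord k f| ≤ |b.coord j f|

def BioSystem.QuasiGreedy (b : BioSystem mem nrm) : Prop :=
  ∃ C : ℝ, ∀ f, mem f → ∀ A : Finset ℕ, b.GreedySet f A → nrm (b.proj A f) ≤ C * nrm f

def BioSystem.Democratic (b : BioSystem mem nrm) : Prop :=
  ∃ C : ℝ, ∀ A B : Finset ℕ, A.card ≤ B.card →
    nrm (∑ n ∈ A, b.vec n) ≤ C * nrm (∑ n ∈ B, b.vec n)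

def BioSystem.AlmostGreedy (b : BioSystem mem nrm) : Prop :=
  b.QuasiGreedy ∧ b.Democratic

/-- Asymptotic suppression unconditionality: coordinate projections `S_A` with
`|A| < min A` are uniformly bounded. -/
def BioSystem.ASU (b : BioSystem mem nrm) : Prop :=
  ∃ D : ℝ, ∀ A : Finset ℕ, (∀ n ∈ A, A.card < n) →
    ∀ f, mem f → nrm (b.proj A f) ≤ D * nrm f

/-- The fundamental function (upper super-democracy function). -/
def BioSystem.fundFun (b : BioSystem mem nrm) (m : ℕ) : ℝ :=
  sSup {t : ℝ | ∃ (A : Finset ℕ) (ε : ℕ → ℝ), A.card ≤ m ∧ (∀ n ∈ A, |ε n| = 1) ∧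
    t = nrm (∑ n ∈ A, ε n • b.vec n)}

/-- The unconditionality parameters `k_m`. -/
def BioSystem.kparam (b : BioSystem mem nrm) (m : ℕ) : ℝ :=
  sSup {t : ℝ | ∃ (A : Finset ℕ) (f : X), A.card ≤ m ∧ mem f ∧ nrm f ≤ 1 ∧
    t = nrm (b.proj A f)}

/-- The unconditionality parameters `k̃_m` (restricted to the span of the first
`m` basis vectors). -/
def BioSystem.ktilde (b : BioSystem mem nrm) (m : ℕ) : ℝ :=
  sSup {t : ℝ | ∃ (A : Finset ℕ) (a : ℕ → ℝ),
    nrm (∑ n ∈ Finset.range m, a n • b.vec n) ≤ 1 ∧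
    t = nrm (b.proj A (∑ n ∈ Finset.range m, a n • b.vec n))}

/-! ### Symmetric and subsymmetric sequence spaces -/

/-- The indicator of `{0, 1, ..., m-1}`. -/
def indic (m : ℕ) : ℕ → ℝ := fun j => if j < m then 1 else 0

/-- The `n`-th unit vector. -/
def unitVec (n : ℕ) : ℕ → ℝ := fun j => if j = n then 1 else 0

/-- The spreading `Σ_n ε_n f_n e_{φ(n)}` of a sequence `f`. -/
def spread (φ : ℕ → ℕ) (ε : ℕ → ℝ) (f : ℕ → ℝ) : ℕ → ℝ :=
  fun j => if h : ∃ n, φ n = j then ε h.choose * f h.choose else 0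

/-- A symmetric sequence space: a quasi-Banach sequence space whose quasi-norm is
invariant under permutations and signs. -/
structure SymmetricSpace where
  mem : (ℕ → ℝ) → Prop
  nrm : (ℕ → ℝ) → ℝ
  kappa : ℝ
  one_le_kappa : 1 ≤ kappa
  zero_mem : mem 0
  add_mem : ∀ {f g}, mem f → mem g → mem (f + g)
  smul_mem : ∀ (a : ℝ) {f}, mem f → mem (a • f)
  nrm_nonneg : ∀ f, 0 ≤ nrm f
  nrm_eq_zero : ∀ {f}, mem f → (nrm f = 0 ↔ f = 0)
  nrm_smul : ∀ (a : ℝ) (f : ℕ → ℝ), nrm (a • f) = |a| * nrm f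
  nrm_triangle : ∀ {f g}, mem f → mem g → nrm (f + g) ≤ kappa * (nrm f + nrm g)
  complete : ∀ u : ℕ → (ℕ → ℝ), (∀ n, mem (u n)) → QCauchy nrm u →
    ∃ f, mem f ∧ QTendsto nrm u f
  symmetric : ∀ {f}, mem f → ∀ (ε : ℕ → ℝ), (∀ n, |ε n| = 1) → ∀ π : Equiv.Perm ℕ,
    mem (fun j => ε j * f (π j)) ∧ nrm (fun j => ε j * f (π j)) = nrm f

/-- Fundamental function of a symmetric sequence space. -/
def SymmetricSpace.Lam (S : SymmetricSpace) (m : ℕ) : ℝ := S.nrm (indic m)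

/-- A (locally convex, i.e. Banach) subsymmetric sequence space. -/
structure SubsymmetricSpace where
  mem : (ℕ → ℝ) → Prop
  nrm : (ℕ → ℝ) → ℝ
  zero_mem : mem 0
  add_mem : ∀ {f g}, mem f → mem g → mem (f + g)
  smul_mem : ∀ (a : ℝ) {f}, mem f → mem (a • f)
  nrm_nonneg : ∀ f, 0 ≤ nrm f
  nrm_eq_zero : ∀ {f}, mem f → (nrm f = 0 ↔ f = 0)
  nrm_smul : ∀ (a : ℝ) (f : ℕ → ℝ), nrm (a • f) = |a| * nrm f
  nrm_triangle : ∀ {f g}, mem f → mem g → nrm (f + g) ≤ nrm f + nrm g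
  complete : ∀ u : ℕ → (ℕ → ℝ), (∀ n, mem (u n)) → QCauchy nrm u →
    ∃ f, mem f ∧ QTendsto nrm u f
  unit_mem : ∀ n, mem (unitVec n)
  unit_basis : ∀ f, mem f →
    QTendsto nrm (fun m => fun j => if j < m then f j else 0) f
  subsym : ∀ {f}, mem f → ∀ (ε : ℕ → ℝ), (∀ n, |ε n| = 1) → ∀ φ : ℕ → ℕ, StrictMono φ →
    mem (spread φ ε f) ∧ nrm (spread φ ε f) = nrm f

/-- Fundamental function of (the unit vector system of) a subsymmetric sequence space. -/
def SubsymmetricSpace.Lam (S : SubsymmetricSpace) (m : ℕ) : ℝ := S.nrm (indic m)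

/-- The dual fundamental function `Λ*_m = m / Λ_m`. -/
def SubsymmetricSpace.LamStar (S : SubsymmetricSpace) (m : ℕ) : ℝ := (m : ℝ) / S.Lam m

/-- Lower regularity property of a sequence of positive reals (indexed by `m ≥ 1`). -/
def LRP (Γ : ℕ → ℝ) : Prop := ∃ b : ℕ, 0 < b ∧ ∀ m : ℕ, 1 ≤ m → 2 * Γ m ≤ Γ (b * m)

/-- Upper regularity property. -/
def URP (Γ : ℕ → ℝ) : Prop := ∃ b : ℕ, 0 < b ∧ ∀ m : ℕ, 1 ≤ m → 2 * Γ (b * m) ≤ (b : ℝ) * Γ m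

/-- Superreflexivity of a subsymmetric sequence space: it admits an equivalent
uniformly convex norm. -/
def SubsymmetricSpace.Superreflexive (S : SubsymmetricSpace) : Prop :=
  ∃ nrm' : (ℕ → ℝ) → ℝ,
    (∀ f, S.mem f → 0 ≤ nrm' f) ∧
    (∀ (a : ℝ) (f), S.mem f → nrm' (a • f) = |a| * nrm' f) ∧
    (∀ f g, S.mem f → S.mem g → nrm' (f + g) ≤ nrm' f + nrm' g) ∧
    (∃ c C : ℝ, 0 < c ∧ ∀ f, S.mem f → c * S.nrm f ≤ nrm' f ∧ nrm' f ≤ C * S.nrm f) ∧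
    (∀ ε : ℝ, 0 < ε → ∃ δ : ℝ, 0 < δ ∧ ∀ f g, S.mem f → S.mem g →
      nrm' f ≤ 1 → nrm' g ≤ 1 → ε ≤ nrm' (f - g) → nrm' (f + g) ≤ 2 * (1 - δ))

/-! ### Upper and lower estimates -/

/-- A finite family with pairwise disjoint supports. -/
def DisjFam {ι : Type*} (F : ι → (ℕ → ℝ)) (J : Finset ι) : Prop :=
  ∀ i ∈ J, ∀ j ∈ J, i ≠ j → ∀ k, F i k = 0 ∨ F j k = 0

/-- `(Σ_{i∈J} |g i|^q)^{1/q}`, interpreted as `max_{i∈J} |g i|` when `q = ∞`. -/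
def estNorm (q : ℝ≥0∞) {ι : Type*} (J : Finset ι) (g : ι → ℝ) : ℝ :=
  if q = ⊤ then ((J.sup fun i => Real.toNNReal |g i| : NNReal) : ℝ)
  else (∑ i ∈ J, |g i| ^ q.toReal) ^ (1 / q.toReal)

/-- Upper `s`-estimate for a subsymmetric space (`s` finite). -/
def SubsymmetricSpace.UpperEst (S : SubsymmetricSpace) (s : ℝ) : Prop :=
  ∃ C : ℝ, ∀ (J : Finset ℕ) (F : ℕ → (ℕ → ℝ)), (∀ i ∈ J, S.mem (F i)) → DisjFam F J →
    S.nrm (∑ i ∈ J, F i) ≤ C * (∑ i ∈ J, S.nrm (F i) ^ s) ^ (1 / s)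

/-- Lower `q`-estimate for a subsymmetric space (`q` finite). -/
def SubsymmetricSpace.LowerEst (S : SubsymmetricSpace) (q : ℝ) : Prop :=
  ∃ C : ℝ, ∀ (J : Finset ℕ) (F : ℕ → (ℕ → ℝ)), (∀ i ∈ J, S.mem (F i)) → DisjFam F J →
    (∑ i ∈ J, S.nrm (F i) ^ q) ^ (1 / q) ≤ C * S.nrm (∑ i ∈ J, F i)

/-- Lower `q`-estimate, `q ∈ (0, ∞]`. -/
def SubsymmetricSpace.LowerEstE (S : SubsymmetricSpace) (q : ℝ≥0∞) : Prop :=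
  ∃ C : ℝ, ∀ (J : Finset ℕ) (F : ℕ → (ℕ → ℝ)), (∀ i ∈ J, S.mem (F i)) → DisjFam F J →
    estNorm q J (fun i => S.nrm (F i)) ≤ C * S.nrm (∑ i ∈ J, F i)

/-! ### Squeeze-symmetry -/

/-- The system is squeezed between the symmetric spaces `S₁` and `S₂`: the series
transform is bounded from `S₁` (on finitely supported vectors) and the coefficient
transform is bounded into `S₂`. -/
def BioSystem.SqueezedBetween (b : BioSystem mem nrm) (S₁ S₂ : SymmetricSpace) : Prop :=
  (∃ C : ℝ, ∀ a : ℕ →₀ ℝ, S₁.mem ⇑a →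
    nrm (∑ n ∈ a.support, a n • b.vec n) ≤ C * S₁.nrm ⇑a) ∧
  (∃ C : ℝ, ∀ f, mem f → S₂.mem (fun n => b.coord n f) ∧
    S₂.nrm (fun n => b.coord n f) ≤ C * nrm f)

/-- Squeeze-symmetric system: squeezed between two symmetric spaces with
equivalent fundamental functions. -/
def BioSystem.SqueezeSymmetric (b : BioSystem mem nrm) : Prop :=
  ∃ S₁ S₂ : SymmetricSpace, b.SqueezedBetween S₁ S₂ ∧
    ∃ c C : ℝ, 0 < c ∧ ∀ m : ℕ, 1 ≤ m →
      c * S₂.Lam m ≤ S₁.Lam m ∧ S₁.Lam m ≤ C * S₂.Lam m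

/-! ### Ordered partitions and the Dilworth–Kalton–Kutzarova construction -/

/-- An ordered partition of `ℕ` into (finite, nonempty) integer intervals. -/
structure OrderedPartition where
  part : ℕ → Finset ℕ
  nonempty : ∀ n, (part n).Nonempty
  ordered : ∀ n, ∀ i ∈ part n, ∀ j ∈ part (n + 1), i < j
  covers : ∀ k : ℕ, ∃ n, k ∈ part n

def OrderedPartition.N (σ : OrderedPartition) (n : ℕ) : ℕ := (σ.part n).card

def OrderedPartition.M (σ : OrderedPartition) (r : ℕ) : ℕ := ∑ n ∈ Finset.range r, σ.N n

/-- The averaging projection `P_σ`. -/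
def OrderedPartition.Pavg (σ : OrderedPartition) (f : ℕ → ℝ) : ℕ → ℝ := fun j =>
  if h : ∃ n, j ∈ σ.part n then
    (∑ i ∈ σ.part h.choose, f i) / ((σ.part h.choose).card : ℝ)
  else 0

/-- The complementary projection `Q_σ = Id - P_σ`. -/
def OrderedPartition.Qavg (σ : OrderedPartition) (f : ℕ → ℝ) : ℕ → ℝ := f - σ.Pavg f

/-- The functionals `v_n* = (Λ*_{N_n})⁻¹ Σ_{j∈σ_n} e_j*`. -/
def vstar (S : SubsymmetricSpace) (σ : OrderedPartition) (n : ℕ) (f : ℕ → ℝ) : ℝ :=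
  (S.Lam (σ.N n) / (σ.N n : ℝ)) * ∑ j ∈ σ.part n, f j

/-- The map `H(f) = Σ_n v_n*(f) x_n`. -/
def Hmap {X : Type*} [AddCommGroup X] [Module ℝ X] (B : QuasiBanach X) (b : QBasis B)
    (S : SubsymmetricSpace) (σ : OrderedPartition) (f : ℕ → ℝ) : X :=
  ∑ᶠ n, vstar S σ n f • b.vec n

/-- The quasi-norm `‖f‖ = ‖Q_σ f‖_S + ‖H f‖_X` on finitely supported sequences,
whose completion is the space `𝕐[𝒳,𝕊,σ]`. -/
def YNorm {X : Type*} [AddCommGroup X] [Module ℝ X] (B : QuasiBanach X) (b : QBasis B)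
    (S : SubsymmetricSpace) (σ : OrderedPartition) (f : ℕ → ℝ) : ℝ :=
  S.nrm (σ.Qavg f) + B.q (Hmap B b S σ f)

/-! ### Concrete sequence spaces -/

/-- Membership in `ℓ_p`, `0 < p < ∞`. -/
def lpMem (p : ℝ) (f : ℕ → ℝ) : Prop := Summable fun n => |f n| ^ p

/-- The `ℓ_p` quasi-norm, `0 < p < ∞`. -/
def lpNrm (p : ℝ) (f : ℕ → ℝ) : ℝ := (∑' n, |f n| ^ p) ^ (1 / p)

/-- Membership in `ℓ_p` for extended `p` (where `ℓ_∞` means `c₀`). -/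
def lpMemE (p : ℝ≥0∞) (f : ℕ → ℝ) : Prop :=
  if p = ⊤ then Filter.Tendsto f Filter.atTop (nhds 0) else lpMem p.toReal f

/-- The `ℓ_p` quasi-norm for extended `p`. -/
def lpNrmE (p : ℝ≥0∞) (f : ℕ → ℝ) : ℝ :=
  if p = ⊤ then ⨆ n, |f n| else lpNrm p.toReal f

/-- Membership in the matrix space `Z_{p,q} = ℓ_q(ℓ_p)` (with `ℓ_∞` meaning `c₀`). -/
def ZMem (p q : ℝ≥0∞) (f : ℕ → ℕ → ℝ) : Prop :=
  (∀ n, lpMemE p (f n)) ∧ lpMemE q (fun n => lpNrmE p (f n))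

/-- The quasi-norm of `Z_{p,q} = ℓ_q(ℓ_p)`. -/
def ZNrm (p q : ℝ≥0∞) (f : ℕ → ℕ → ℝ) : ℝ := lpNrmE q (fun n => lpNrmE p (f n))

/-!
Let `N` be a uniformly convex norm equivalent to that of `S`, and let `U n` be the supremum of `N`
over all signed indicators of sets of cardinality `n`, so that `U` and `Λ` are equivalent.

If `f` and `g` are disjoint signed indicators of cardinality `n`, then `f + g` and `f - g` are
signed indicators of cardinality `2n`, and
* `N (f - g)` is at least of the order of `U n`, so that uniform convexity applied to `f` and `g`
  gives `U (2n) ≤ 2 q U n` for some `q < 1`;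
* `N ((f + g) - (f - g)) = N (2 g)` is at least of the order of `U (2n)`, so that uniform convexity
  applied to `f + g` and `f - g` gives `U n ≤ q U (2n)` because `(f + g) + (f - g) = 2 f`.

Iterating these improvements on the trivial bounds `U (2n) ≤ 2 U n` and `U n ≤ U (2n)` beats the
equivalence constants, and yields the two regularity properties of `Λ`.
-/

/-! ### Regularity from doubling -/

section Regularity

variable {Γ U : ℕ → ℝ} {c C a : ℝ}

lemma apply_two_pow_mul_le_pow_mul (ha : 0 ≤ a) (hU : ∀ m, 1 ≤ m → U (2 * m) ≤ a * U m) {m : ℕ}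
    (hm : 1 ≤ m) (k : ℕ) : U (2 ^ k * m) ≤ a ^ k * U m := by
  simpa using le_geom (u := fun k => U (2 ^ k * m)) ha k fun k _ => by
    simpa only [pow_succ', mul_assoc] using hU (2 ^ k * m) (Nat.mul_pos (by positivity) hm)

lemma pow_mul_le_apply_two_pow_mul (ha : 0 ≤ a) (hU : ∀ m, 1 ≤ m → a * U m ≤ U (2 * m)) {m : ℕ}
    (hm : 1 ≤ m) (k : ℕ) : a ^ k * U m ≤ U (2 ^ k * m) := by
  simpa using geom_le (u := fun k => U (2 ^ k * m)) ha k fun k _ => by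
    simpa only [pow_succ', mul_assoc] using hU (2 ^ k * m) (Nat.mul_pos (by positivity) hm)

lemma URP_of_apply_two_mul_le (hc : 0 < c) (hC : 0 < C) (hΓ : ∀ m, 0 ≤ Γ m)
    (hlo : ∀ m, c * Γ m ≤ U m) (hup : ∀ m, U m ≤ C * Γ m) (ha : 0 ≤ a) (ha2 : a < 2)
    (hU : ∀ m, 1 ≤ m → U (2 * m) ≤ a * U m) : URP Γ := by
  obtain ⟨k, hk⟩ : ∃ k : ℕ, (a / 2) ^ k < c / (2 * C) :=
    exists_pow_lt_of_lt_one (by positivity) (by linarith)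
  have hk' : 2 * (a ^ k * C) ≤ c * 2 ^ k := by
    rw [div_pow, div_lt_div_iff₀ (by positivity) (by positivity)] at hk
    linarith
  refine ⟨2 ^ k, by positivity, fun m hm => le_of_mul_le_mul_left ?_ hc⟩
  push_cast
  calc c * (2 * Γ (2 ^ k * m)) ≤ 2 * U (2 ^ k * m) := by linarith [hlo (2 ^ k * m)]
    _ ≤ 2 * (a ^ k * U m) := by gcongr; exact apply_two_pow_mul_le_pow_mul ha hU hm k
    _ ≤ 2 * (a ^ k * (C * Γ m)) := by gcongr; exact hup m
    _ = 2 * (a ^ k * C) * Γ m := by ring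
    _ ≤ c * 2 ^ k * Γ m := by gcongr; exact hΓ m
    _ = c * (2 ^ k * Γ m) := by ring

lemma LRP_of_le_apply_two_mul (hc : 0 < c) (hC : 0 < C) (hΓ : ∀ m, 0 ≤ Γ m)
    (hlo : ∀ m, c * Γ m ≤ U m) (hup : ∀ m, U m ≤ C * Γ m) (ha : 1 < a)
    (hU : ∀ m, 1 ≤ m → a * U m ≤ U (2 * m)) : LRP Γ := by
  obtain ⟨k, hk⟩ : ∃ k : ℕ, 2 * C / c < a ^ k := pow_unbounded_of_one_lt _ ha
  have hk' : 2 * C ≤ a ^ k * c := ((div_lt_iff₀ hc).1 hk).le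
  refine ⟨2 ^ k, by positivity, fun m hm => le_of_mul_le_mul_left ?_ hC⟩
  calc C * (2 * Γ m) = 2 * C * Γ m := by ring
    _ ≤ a ^ k * c * Γ m := by gcongr; exact hΓ m
    _ = a ^ k * (c * Γ m) := by ring
    _ ≤ a ^ k * U m := by gcongr; exact hlo m
    _ ≤ U (2 ^ k * m) := pow_mul_le_apply_two_pow_mul (by linarith) hU hm k
    _ ≤ C * Γ (2 ^ k * m) := hup _

end Regularity

/-! ### Signed indicators -/

/-- A signed indicator of the finite set `A`: a vector `Σ_{n ∈ A} ε_n e_n` with `|ε_n| = 1`,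
encoded by its absolute value. -/
def IsSignedIndicator (A : Finset ℕ) (f : ℕ → ℝ) : Prop :=
  ∀ j, |f j| = if j ∈ A then 1 else 0

lemma isSignedIndicator_indicator_one (A : Finset ℕ) :
    IsSignedIndicator A ((A : Set ℕ).indicator 1) := by
  intro j
  by_cases hj : j ∈ A <;> simp [hj]

lemma isSignedIndicator_indic (n : ℕ) : IsSignedIndicator (Finset.range n) (indic n) := by
  intro j
  by_cases hj : j < n <;> simp [indic, hj]

namespace IsSignedIndicator

variable {A B : Finset ℕ} {f g : ℕ → ℝ}

lemma eq_zero_of_notMem (hf : IsSignedIndicator A f) {j : ℕ} (hj : j ∉ A) : f j = 0 := by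
  simpa [hj] using hf j

lemma neg (hf : IsSignedIndicator A f) : IsSignedIndicator A (-f) :=
  fun j => by simpa using hf j

lemma add (hf : IsSignedIndicator A f) (hg : IsSignedIndicator B g) (hAB : Disjoint A B) :
    IsSignedIndicator (A ∪ B) (f + g) := by
  intro j
  by_cases hjA : j ∈ A
  · have hjB : j ∉ B := Finset.disjoint_left.1 hAB hjA
    simp [hf j, hg.eq_zero_of_notMem hjB, hjA]
  · simp [hf.eq_zero_of_notMem hjA, hg j, hjA]

lemma sub (hf : IsSignedIndicator A f) (hg : IsSignedIndicator B g) (hAB : Disjoint A B) :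
    IsSignedIndicator (A ∪ B) (f - g) := by
  simpa only [sub_eq_add_neg] using hf.add hg.neg hAB

lemma indicator (hf : IsSignedIndicator A f) (s : Set ℕ) :
    IsSignedIndicator {j ∈ A | j ∈ s} (s.indicator f) := by
  intro j
  by_cases hj : j ∈ s <;> simp [hj, hf j]

lemma exists_eq_add {m n : ℕ} (hf : IsSignedIndicator A f) (hA : A.card = m + n) :
    ∃ (B D : Finset ℕ) (g h : ℕ → ℝ), B.card = m ∧ D.card = n ∧ Disjoint B D ∧
      IsSignedIndicator B g ∧ IsSignedIndicator D h ∧ f = g + h := by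
  obtain ⟨B, hBA, hB⟩ := Finset.exists_subset_card_eq (show m ≤ A.card by omega)
  have hg : IsSignedIndicator B ((B : Set ℕ).indicator f) := by
    simpa [Finset.filter_mem_eq_inter, Finset.inter_eq_right.2 hBA] using hf.indicator B
  have hh : IsSignedIndicator (A \ B) ((B : Set ℕ)ᶜ.indicator f) := by
    simpa [Finset.filter_notMem_eq_sdiff] using hf.indicator (B : Set ℕ)ᶜ
  exact ⟨B, A \ B, _, _, hB, by rw [Finset.card_sdiff_of_subset hBA]; omega, Finset.disjoint_sdiff,
    hg, hh, (Set.indicator_self_add_compl _ f).symm⟩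

end IsSignedIndicator

lemma exists_disjoint_card_eq {α : Type*} [Infinite α] (A : Finset α) (n : ℕ) :
    ∃ B : Finset α, Disjoint A B ∧ B.card = n := by
  obtain ⟨T, hAT, hT⟩ := Infinite.exists_superset_card_eq A (A.card + n) (by omega)
  exact ⟨T \ A, Finset.disjoint_sdiff, by rw [Finset.card_sdiff_of_subset hAT]; omega⟩

/-! ### Signed indicators in a subsymmetric space -/

lemma spread_apply {φ : ℕ → ℕ} (hφ : Function.Injective φ) (ε f : ℕ → ℝ) (n : ℕ) :
    spread φ ε f (φ n) = ε n * f n := by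
  have h : ∃ i, φ i = φ n := ⟨n, rfl⟩
  rw [spread, dif_pos h, hφ h.choose_spec]

lemma spread_of_notMem_range {φ : ℕ → ℕ} {j : ℕ} (hj : j ∉ Set.range φ) (ε f : ℕ → ℝ) :
    spread φ ε f j = 0 :=
  dif_neg hj

lemma exists_strictMono_mem_iff_lt_card (A : Finset ℕ) :
    ∃ φ : ℕ → ℕ, StrictMono φ ∧ ↑A ⊆ Set.range φ ∧ ∀ i, φ i ∈ A ↔ i < A.card := by
  obtain ⟨K, hK⟩ := A.exists_nat_subset_range
  let p : ℕ → Prop := fun j => j ∈ A ∨ K ≤ j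
  have hp : (Set.ofPred p).Infinite := (Set.Ici_infinite K).mono fun j hj => Or.inr hj
  have hcount : Nat.count p K = A.card := by
    rw [Nat.count_eq_card_filter_range]
    congr 1
    ext j
    have := @hK j
    grind
  refine ⟨Nat.nth p, Nat.nth_strictMono hp, fun j hj => ?_, fun i => ?_⟩
  · exact Nat.subset_range_nth (Or.inl hj : p j)
  · rw [← hcount, ← not_le, Nat.count_le_iff_le_nth hp, not_le]
    exact ⟨fun h => Finset.mem_range.1 (hK h),
      fun h => (Nat.nth_mem_of_infinite hp i).resolve_right h.not_ge⟩

lemma IsSignedIndicator.exists_spread_eq {A : Finset ℕ} {f : ℕ → ℝ} (hf : IsSignedIndicator A f) :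
    ∃ (φ : ℕ → ℕ) (ε : ℕ → ℝ), StrictMono φ ∧ (∀ n, |ε n| = 1) ∧
      spread φ ε (indic A.card) = f := by
  obtain ⟨φ, hφ, hrange, hmem⟩ := exists_strictMono_mem_iff_lt_card A
  refine ⟨φ, fun i => if i < A.card then f (φ i) else 1, hφ, fun i => ?_, funext fun j => ?_⟩
  · by_cases hi : i < A.card
    · simp [hi, hf (φ i), hmem i]
    · simp [hi]
  · by_cases hj : j ∈ Set.range φ
    · obtain ⟨i, rfl⟩ := hj
      rw [spread_apply hφ.injective]
      by_cases hi : i < A.card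
      · simp [indic, hi]
      · simp [indic, hi, hf.eq_zero_of_notMem (mt (hmem i).1 hi)]
    · rw [spread_of_notMem_range hj, hf.eq_zero_of_notMem fun hjA => hj (hrange hjA)]

namespace SubsymmetricSpace

variable (S : SubsymmetricSpace) {A : Finset ℕ} {f g : ℕ → ℝ}

lemma sub_mem (hf : S.mem f) (hg : S.mem g) : S.mem (f - g) := by
  simpa [sub_eq_add_neg] using S.add_mem hf (S.smul_mem (-1) hg)

lemma indic_mem (n : ℕ) : S.mem (indic n) := by
  induction n with
  | zero =>
    have h : indic 0 = 0 := by ext j; simp [indic]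
    exact h ▸ S.zero_mem
  | succ n ih =>
    have h : indic (n + 1) = indic n + unitVec n := by
      ext j
      simp only [indic, unitVec, Pi.add_apply]
      grind
    exact h ▸ S.add_mem ih (S.unit_mem n)

lemma mem_of_isSignedIndicator (hf : IsSignedIndicator A f) : S.mem f := by
  obtain ⟨φ, ε, hφ, hε, rfl⟩ := hf.exists_spread_eq
  exact (S.subsym (S.indic_mem _) ε hε φ hφ).1

lemma nrm_of_isSignedIndicator (hf : IsSignedIndicator A f) : S.nrm f = S.Lam A.card := by
  obtain ⟨φ, ε, hφ, hε, rfl⟩ := hf.exists_spread_eq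
  exact (S.subsym (S.indic_mem _) ε hε φ hφ).2

lemma Lam_nonneg (n : ℕ) : 0 ≤ S.Lam n :=
  S.nrm_nonneg _

lemma Lam_pos {n : ℕ} (hn : 1 ≤ n) : 0 < S.Lam n := by
  refine (S.Lam_nonneg n).lt_of_ne' fun h => ?_
  have h0 : indic n 0 = 0 := congrFun ((S.nrm_eq_zero (S.indic_mem n)).1 h) 0
  simp [indic, Nat.pos_iff_ne_zero.1 hn] at h0

lemma Lam_mono : Monotone S.Lam := by
  intro m n hmn
  -- `2 • indic m` is the sum of two signed indicators of `Finset.range n`.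
  have hg : IsSignedIndicator (Finset.range n) ((2 : ℝ) • indic m - indic n) := by
    intro j
    simp only [indic, Pi.sub_apply, Pi.smul_apply, smul_eq_mul, Finset.mem_range]
    grind
  have h := S.nrm_triangle (S.indic_mem n) (S.mem_of_isSignedIndicator hg)
  rw [add_sub_cancel, S.nrm_smul, S.nrm_of_isSignedIndicator hg, Finset.card_range, abs_two] at h
  linarith [show 2 * S.Lam m ≤ S.Lam n + S.Lam n from h]

lemma Lam_add_le (m n : ℕ) : S.Lam (m + n) ≤ S.Lam m + S.Lam n := by
  have hg : IsSignedIndicator (Finset.Ico m (m + n)) (indic (m + n) - indic m) := by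
    intro j
    simp only [indic, Pi.sub_apply, Finset.mem_Ico]
    grind
  have h := S.nrm_triangle (S.indic_mem m) (S.mem_of_isSignedIndicator hg)
  rwa [add_sub_cancel, S.nrm_of_isSignedIndicator hg, Nat.card_Ico, Nat.add_sub_cancel_left] at h

end SubsymmetricSpace

/-! ### The super-democracy function of a gauge -/

/-- The upper super-democracy function of a gauge `N` on sequences: the supremum of `N` over all
signed indicators of sets of cardinality `n`. It has the junk value `0` where `N` is unbounded on
them. -/
def superDemocracyFun (N : (ℕ → ℝ) → ℝ) (n : ℕ) : ℝ :=
  sSup (N '' {f | ∃ A : Finset ℕ, A.card = n ∧ IsSignedIndicator A f})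

lemma superDemocracyFun_le {N : (ℕ → ℝ) → ℝ} {n : ℕ} {r : ℝ}
    (h : ∀ A f, A.card = n → IsSignedIndicator A f → N f ≤ r) : superDemocracyFun N n ≤ r := by
  refine csSup_le ⟨_, indic n, ⟨_, Finset.card_range n, isSignedIndicator_indic n⟩, rfl⟩ ?_
  rintro _ ⟨f, ⟨A, hA, hf⟩, rfl⟩
  exact h A f hA hf

/-- The midpoint form of uniform convexity at a fixed `ε`, at every scale `r`: the factor `q`
corresponds to `1 - δ`. -/
def MidpointContraction {E : Type*} [AddCommGroup E] (mem : E → Prop) (N : E → ℝ) (ε q : ℝ) :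
    Prop :=
  ∀ r, 0 < r → ∀ f g, mem f → mem g → N f ≤ r → N g ≤ r → ε * r ≤ N (f - g) → N (f + g) ≤ 2 * q * r

namespace SubsymmetricSpace

variable (S : SubsymmetricSpace) {N : (ℕ → ℝ) → ℝ} {A : Finset ℕ} {f : ℕ → ℝ} {c C q : ℝ} {n : ℕ}

lemma le_superDemocracyFun (hup : ∀ f, S.mem f → N f ≤ C * S.nrm f)
    (hf : IsSignedIndicator A f) : N f ≤ superDemocracyFun N A.card := by
  refine le_csSup ⟨C * S.Lam A.card, ?_⟩ ⟨f, ⟨A, rfl, hf⟩, rfl⟩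
  rintro _ ⟨g, ⟨B, hB, hg⟩, rfl⟩
  rw [← hB, ← S.nrm_of_isSignedIndicator hg]
  exact hup g (S.mem_of_isSignedIndicator hg)

lemma superDemocracyFun_le_mul_Lam (hup : ∀ f, S.mem f → N f ≤ C * S.nrm f) (n : ℕ) :
    superDemocracyFun N n ≤ C * S.Lam n := by
  refine superDemocracyFun_le fun A f hA hf => ?_
  rw [← hA, ← S.nrm_of_isSignedIndicator hf]
  exact hup f (S.mem_of_isSignedIndicator hf)

lemma mul_Lam_le_superDemocracyFun (hlo : ∀ f, S.mem f → c * S.nrm f ≤ N f)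
    (hup : ∀ f, S.mem f → N f ≤ C * S.nrm f) (n : ℕ) : c * S.Lam n ≤ superDemocracyFun N n := by
  have h := S.le_superDemocracyFun hup (isSignedIndicator_indic n)
  rw [Finset.card_range] at h
  exact (hlo _ (S.indic_mem n)).trans h

lemma superDemocracyFun_pos (hc : 0 < c) (hlo : ∀ f, S.mem f → c * S.nrm f ≤ N f)
    (hup : ∀ f, S.mem f → N f ≤ C * S.nrm f) (hn : 1 ≤ n) : 0 < superDemocracyFun N n :=
  (mul_pos hc (S.Lam_pos hn)).trans_le (S.mul_Lam_le_superDemocracyFun hlo hup n)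

lemma div_mul_superDemocracyFun_le (hc : 0 ≤ c) (hC : 0 < C)
    (hup : ∀ f, S.mem f → N f ≤ C * S.nrm f) (n : ℕ) :
    c / C * superDemocracyFun N n ≤ c * S.Lam n := by
  rw [div_mul_eq_mul_div, div_le_iff₀ hC, mul_assoc, mul_comm _ C]
  gcongr
  exact S.superDemocracyFun_le_mul_Lam hup n

lemma superDemocracyFun_two_mul_le (hc : 0 < c) (hC : 0 < C)
    (hlo : ∀ f, S.mem f → c * S.nrm f ≤ N f) (hup : ∀ f, S.mem f → N f ≤ C * S.nrm f)
    (hN : MidpointContraction S.mem N (c / C) q) (hn : 1 ≤ n) :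
    superDemocracyFun N (2 * n) ≤ 2 * q * superDemocracyFun N n := by
  refine superDemocracyFun_le fun A f hA hf => ?_
  obtain ⟨B, D, g, h, hB, hD, hBD, hg, hh, rfl⟩ := hf.exists_eq_add (hA.trans (two_mul n))
  have hsub : IsSignedIndicator (B ∪ D) (g - h) := hg.sub hh hBD
  have hseparated : c / C * superDemocracyFun N n ≤ N (g - h) :=
    calc c / C * superDemocracyFun N n
      _ ≤ c * S.Lam n := S.div_mul_superDemocracyFun_le hc.le hC hup n
      _ ≤ c * S.Lam (B ∪ D).card := by
        gcongr
        exact S.Lam_mono (hB ▸ Finset.card_le_card Finset.subset_union_left)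
      _ = c * S.nrm (g - h) := by rw [S.nrm_of_isSignedIndicator hsub]
      _ ≤ N (g - h) := hlo _ (S.mem_of_isSignedIndicator hsub)
  exact hN _ (S.superDemocracyFun_pos hc hlo hup hn) g h (S.mem_of_isSignedIndicator hg)
    (S.mem_of_isSignedIndicator hh) (hB ▸ S.le_superDemocracyFun hup hg)
    (hD ▸ S.le_superDemocracyFun hup hh) hseparated

lemma superDemocracyFun_le_mul_superDemocracyFun_two_mul (hc : 0 < c) (hC : 0 < C)
    (hsmul : ∀ (a : ℝ) f, S.mem f → N (a • f) = |a| * N f)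
    (hlo : ∀ f, S.mem f → c * S.nrm f ≤ N f) (hup : ∀ f, S.mem f → N f ≤ C * S.nrm f)
    (hN : MidpointContraction S.mem N (c / C) q) (hn : 1 ≤ n) :
    superDemocracyFun N n ≤ q * superDemocracyFun N (2 * n) := by
  refine superDemocracyFun_le fun A f hA hf => ?_
  obtain ⟨B, hAB, hB⟩ := exists_disjoint_card_eq A n
  have hg := isSignedIndicator_indicator_one B
  set g : ℕ → ℝ := (B : Set ℕ).indicator 1
  have hcard : (A ∪ B).card = 2 * n := by
    rw [Finset.card_union_of_disjoint hAB, hA, hB, two_mul]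
  have hadd := hf.add hg hAB
  have hsub := hf.sub hg hAB
  have hsum : f + g + (f - g) = (2 : ℝ) • f := by rw [two_smul]; abel
  have hdiff : f + g - (f - g) = (2 : ℝ) • g := by rw [two_smul]; abel
  have hseparated : c / C * superDemocracyFun N (2 * n) ≤ N (f + g - (f - g)) :=
    calc c / C * superDemocracyFun N (2 * n)
      _ ≤ c * S.Lam (n + n) := two_mul n ▸ S.div_mul_superDemocracyFun_le hc.le hC hup (2 * n)
      _ ≤ c * (S.Lam n + S.Lam n) := by gcongr; exact S.Lam_add_le n n
      _ = c * S.nrm ((2 : ℝ) • g) := by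
        rw [S.nrm_smul, S.nrm_of_isSignedIndicator hg, hB, abs_two, two_mul]
      _ ≤ N ((2 : ℝ) • g) := hlo _ (S.smul_mem 2 (S.mem_of_isSignedIndicator hg))
      _ = N (f + g - (f - g)) := by rw [hdiff]
  have hcontr := hN _ (S.superDemocracyFun_pos hc hlo hup (by omega)) (f + g) (f - g)
    (S.mem_of_isSignedIndicator hadd) (S.mem_of_isSignedIndicator hsub)
    (hcard ▸ S.le_superDemocracyFun hup hadd) (hcard ▸ S.le_superDemocracyFun hup hsub) hseparated
  rw [hsum, hsmul 2 f (S.mem_of_isSignedIndicator hf), abs_two] at hcontr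
  linarith

lemma exists_midpointContraction {ε δ : ℝ} (hsmul : ∀ (a : ℝ) f, S.mem f → N (a • f) = |a| * N f)
    (hδ : 0 < δ) (hN : ∀ f g, S.mem f → S.mem g → N f ≤ 1 → N g ≤ 1 → ε ≤ N (f - g) →
      N (f + g) ≤ 2 * (1 - δ)) :
    ∃ q, 0 < q ∧ q < 1 ∧ MidpointContraction S.mem N ε q := by
  -- The maximum keeps `q` positive when `1 ≤ δ`.
  refine ⟨max (1 - δ) (1 / 2), by positivity, max_lt (by linarith) (by norm_num),
    fun r hr f g hf hg hfr hgr hfg => ?_⟩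
  have hscale : ∀ h, S.mem h → N (r⁻¹ • h) = r⁻¹ * N h := fun h hh => by
    rw [hsmul _ h hh, abs_of_pos (inv_pos.2 hr)]
  have h := hN (r⁻¹ • f) (r⁻¹ • g) (S.smul_mem _ hf) (S.smul_mem _ hg)
    (by rwa [hscale f hf, inv_mul_le_iff₀ hr, mul_one])
    (by rwa [hscale g hg, inv_mul_le_iff₀ hr, mul_one])
    (by rwa [← smul_sub, hscale _ (S.sub_mem hf hg), le_inv_mul_iff₀ hr, mul_comm])
  rw [← smul_add, hscale _ (S.add_mem hf hg), inv_mul_le_iff₀ hr] at h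
  calc N (f + g) ≤ 2 * (1 - δ) * r := by linarith
    _ ≤ 2 * max (1 - δ) (1 / 2) * r := by gcongr; exact le_max_left _ _

lemma pos_of_mul_nrm_le_of_le_mul_nrm (hc : 0 < c) (hlo : ∀ f, S.mem f → c * S.nrm f ≤ N f)
    (hup : ∀ f, S.mem f → N f ≤ C * S.nrm f) : 0 < C := by
  have h1 : 0 < S.nrm (indic 1) := S.Lam_pos le_rfl
  have h : 0 < C * S.nrm (indic 1) :=
    (mul_pos hc h1).trans_le ((hlo _ (S.indic_mem 1)).trans (hup _ (S.indic_mem 1)))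
  exact pos_of_mul_pos_left h h1.le

end SubsymmetricSpace

theorem statement11 (S : SubsymmetricSpace) (hsuper : S.Superreflexive) :
    URP S.Lam ∧ LRP S.Lam := by
  obtain ⟨N, -, hsmul, -, ⟨c, C, hc, hequiv⟩, hconvex⟩ := hsuper
  have hlo : ∀ f, S.mem f → c * S.nrm f ≤ N f := fun f hf => (hequiv f hf).1
  have hup : ∀ f, S.mem f → N f ≤ C * S.nrm f := fun f hf => (hequiv f hf).2
  have hC : 0 < C := S.pos_of_mul_nrm_le_of_le_mul_nrm hc hlo hup
  obtain ⟨δ, hδ, hδN⟩ := hconvex (c / C) (by positivity)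
  obtain ⟨q, hq0, hq1, hN⟩ := S.exists_midpointContraction hsmul hδ hδN
  have hUlo := S.mul_Lam_le_superDemocracyFun hlo hup
  have hUup := S.superDemocracyFun_le_mul_Lam hup
  constructor
  · exact URP_of_apply_two_mul_le (a := 2 * q) hc hC S.Lam_nonneg hUlo hUup
      (by positivity) (by linarith)
      fun n hn => S.superDemocracyFun_two_mul_le hc hC hlo hup hN hn
  · refine LRP_of_le_apply_two_mul (a := q⁻¹) hc hC S.Lam_nonneg hUlo hUup
      ((one_lt_inv₀ hq0).2 hq1) fun n hn => ?_
    rw [inv_mul_le_iff₀ hq0]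
    exact S.superDemocracyFun_le_mul_superDemocracyFun_two_mul hc hC hsmul hlo hup hN hn

end AGpaper
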